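/- Every class of languages behaviorally correctly learnable from informants is learnable by a globally consistent, weakly monotone, behaviorally correct full-information learner: [Inf G Bc] = [τ(Cons) Inf G WMon Bc]. -/

import Mathlib

open Filter Classical

namespace InfBc

/-! ### Basic notions: r.e. sets, informants, learners -/

/-- The `e`-th recursively enumerable set (via an acceptable numbering of
partial computable functions, `W e = dom φ_e`). -/
def W (e : ℕ) : Set ℕ := {x | ((Denumerable.ofNat Nat.Partrec.Code e).eval x).Dom}

/-- A language is recursively enumerable. -/
def RE (L : Set ℕ) : Prop := ∃ e, W e = L

abbrev Datum := ℕ × Bool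
abbrev Seq := List Datum
abbrev Informant := ℕ → Datum
abbrev HypSeq := ℕ → Part ℕ
/-- Learners are partial functions; all input types are coded into `ℕ`. -/
abbrev Learner := ℕ →. ℕ
abbrev Restriction := HypSeq → Informant → Prop

/-- Positive information of an infinite sequence. -/
def posI (I : Informant) : Set ℕ := {x | ∃ n, I n = (x, true)}
/-- Negative information of an infinite sequence. -/
def negI (I : Informant) : Set ℕ := {x | ∃ n, I n = (x, false)}

/-- `I` is an informant for the language `L`. -/
def IsInformant (I : Informant) (L : Set ℕ) : Prop := posI I = L ∧ negI I = Lᶜ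

/-- `I` is an informant (for some language), i.e. `I ∈ Inf`. -/
def IsInf (I : Informant) : Prop := IsInformant I (posI I)

/-- `I` is a canonical informant. -/
def Canonical (I : Informant) : Prop := ∀ x, I x = (x, true) ∨ I x = (x, false)

/-- `I[n]`, the length-`n` initial segment of `I`. -/
def segment (I : Informant) (n : ℕ) : Seq := (List.range n).map I

/-- Positive information of a finite sequence. -/
def posS (σ : Seq) : Set ℕ := {x | (x, true) ∈ σ}
/-- Negative information of a finite sequence. -/
def negS (σ : Seq) : Set ℕ := {x | (x, false) ∈ σ}
/-- The content of a finite sequence, as a set. -/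
def contentS (σ : Seq) : Set Datum := {a | a ∈ σ}

/-! ### Interaction operators -/

abbrev InteractionOperator := Learner → Informant → HypSeq

/-- Full-information (Gold-style) interaction: `G(h,I)(i) = h(I[i])`. -/
def Gop : InteractionOperator := fun h I i => h (Encodable.encode (segment I i))

/-- Set-driven interaction: `Sd(h,I)(i) = h(content(I[i]))`. -/
def Sdop : InteractionOperator := fun h I i => h (Encodable.encode (segment I i).toFinset)

/-- The iterated evaluation of an iterative learner on a finite sequence:
start with the initial hypothesis `h(none)` and feed the data one by one. -/
def iterExtend (h : Learner) (σ : Seq) : Part ℕ :=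
  σ.foldl (fun pe a => pe.bind fun e => h (Encodable.encode (some (e, a))))
    (h (Encodable.encode (none : Option (ℕ × Datum))))

/-- Iterative interaction: `It(h,I)(i)` is obtained by feeding `I[i]` one datum
at a time, each time updating the previous hypothesis. -/
def Itop : InteractionOperator := fun h I i => iterExtend h (segment I i)

/-- An iterative learner is confluent if the order and multiplicity in which
the content is presented does not matter. -/
def ConfluentLearner (h : Learner) : Prop :=
  ∀ σ τ : Seq, contentS σ = contentS τ → iterExtend h σ = iterExtend h τ

/-- Confluently iterative interaction. -/
noncomputable def CflItop : InteractionOperator := fun h I i =>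
  if ConfluentLearner h then iterExtend h (segment I i) else Part.none

/-- `β ≼ β'`: every (partial computable) `β`-learner can be translated into a
`β'`-learner with the same hypothesis sequence on every informant. -/
def OpLe (β β' : InteractionOperator) : Prop :=
  ∀ h : Learner, Partrec h → ∃ h' : Learner, Partrec h' ∧
    ∀ I : Informant, IsInf I → ∀ n, β h I n = β' h' I n

/-! ### Learning restrictions -/

/-- The trivial restriction `T`. -/
def TT : Restriction := fun _ _ => True

/-- Explanatory identification. -/
def Ex : Restriction := fun p I =>
  ∃ q, W q = posI I ∧ ∀ᶠ n in atTop, p n = Part.some q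

/-- Behaviorally correct identification. -/
def Bc : Restriction := fun p I => ∀ᶠ n in atTop, ∃ e ∈ p n, W e = posI I

/-- Consistency of a hypothesis with a finite sequence of data. -/
def ConsH (e : ℕ) (σ : Seq) : Prop := posS σ ⊆ W e ∧ negS σ ∩ W e = ∅

/-- Consistency of a hypothesis sequence with an informant. -/
def Cons : Restriction := fun p I => ∀ n, ∃ e ∈ p n, ConsH e (segment I n)

/-- Strongly monotone. -/
def SMon : Restriction := fun p _ =>
  ∀ s t, s ≤ t → ∀ e ∈ p s, ∀ e' ∈ p t, W e ⊆ W e'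

/-- Dual strongly monotone. -/
def SMond : Restriction := fun p _ =>
  ∀ s t, s ≤ t → ∀ e ∈ p s, ∀ e' ∈ p t, W e' ⊆ W e

/-- Monotone. -/
def Mon : Restriction := fun p I =>
  ∀ s t, s ≤ t → ∀ e ∈ p s, ∀ e' ∈ p t, W e ∩ posI I ⊆ W e' ∩ posI I

/-- Dual monotone. -/
def Mond : Restriction := fun p I =>
  ∀ s t, s ≤ t → ∀ e ∈ p s, ∀ e' ∈ p t, (W e)ᶜ ∩ negI I ⊆ (W e')ᶜ ∩ negI I

/-- Weakly monotone. -/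
def WMon : Restriction := fun p I =>
  ∀ s t, s ≤ t → ∀ e ∈ p s, ConsH e (segment I t) → ∀ e' ∈ p t, W e ⊆ W e'

/-- Dual weakly monotone. -/
def WMond : Restriction := fun p I =>
  ∀ s t, s ≤ t → ∀ e ∈ p s, ConsH e (segment I t) → ∀ e' ∈ p t, W e' ⊆ W e

/-- Cautious. -/
def Caut : Restriction := fun p _ =>
  ∀ s t, s < t → ∀ e ∈ p s, ∀ e' ∈ p t, ¬ W e' ⊂ W e

/-- Target cautious. -/
def CautTar : Restriction := fun p I =>
  ∀ s, ∀ e ∈ p s, ¬ posI I ⊂ W e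

/-- Finitely cautious. -/
def CautFin : Restriction := fun p _ =>
  ∀ s t, s < t → ∀ e ∈ p s, ∀ e' ∈ p t, W e' ⊂ W e → (W e').Infinite

/-- Infinitely cautious. -/
def CautInf : Restriction := fun p _ =>
  ∀ s t, s < t → ∀ e ∈ p s, ∀ e' ∈ p t, W e' ⊂ W e → (W e').Finite

/-! ### Learnability -/

/-- The class of admissible learners: all partial computable learners. -/
def AllL : Learner → Prop := fun _ => True
/-- The class of admissible learners: total computable learners (`ℛ`). -/
def TotalL : Learner → Prop := fun h => ∀ x, (h x).Dom
/-- Admissible informants: all informants (`Inf`). -/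
def AllI : Informant → Prop := fun _ => True

/-- `h` learns `L` in the setting given by admissible informants `P`,
interaction operator `β` and local restriction `δ`. -/
def LearnsWith (P : Informant → Prop) (β : InteractionOperator) (δ : Restriction)
    (h : Learner) (L : Set ℕ) : Prop :=
  RE L ∧ ∀ I : Informant, P I → IsInformant I L → δ (β h I) I

/-- `[τ(α) C P β δ]`: the collection of all classes of languages learnable by
some learner in `C` that satisfies the global restriction `α` on all admissible
informants, under interaction operator `β` and local restriction `δ`. -/
def Learnable (α : Restriction) (C : Learner → Prop) (P : Informant → Prop)
    (β : InteractionOperator) (δ : Restriction) : Set (Set (Set ℕ)) :=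
  {𝓛 | ∃ h : Learner, Partrec h ∧ C h ∧
        (∀ I : Informant, IsInf I → P I → α (β h I) I) ∧
        ∀ L ∈ 𝓛, LearnsWith P β δ h L}

/-! ### Properties of restrictions -/

/-- A learning restriction is delayable if it is preserved under postponing
hypotheses along a non-decreasing unbounded function. -/
def Delayable (δ : Restriction) : Prop :=
  ∀ I I' : Informant, IsInf I → IsInf I' → Set.range I = Set.range I' →
    ∀ (p : HypSeq) (s : ℕ → ℕ), Monotone s → (∀ m, ∃ n, m ≤ s n) →
      δ p I → (∀ n, contentS (segment I (s n)) ⊆ contentS (segment I' n)) →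
      δ (fun n => p (s n)) I'

/-- A learning restriction is semantic if it is indifferent to replacing the
hypothesis sequence by a semantically equivalent one. -/
def Semantic (δ : Restriction) : Prop :=
  ∀ (p p' : HypSeq) (I : Informant), δ p I →
    (∀ i, (p i).Dom ↔ (p' i).Dom) →
    (∀ i, ∀ e ∈ p i, ∀ e' ∈ p' i, W e = W e') →
    δ p' I

/-!
Given a learner `h`, the new hypothesis on `σ` contains the positive data of `σ` and everything
that a hypothesis `h v`, with `v` a prefix of `σ`, enumerates before it enumerates any negative
datum of `σ`. This set is uniformly r.e. in `σ`, and it is consistent by construction. As long as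
it stays consistent with later data, none of the enumerations it has used is cut off earlier by
these data, so it can only grow. If `h` is correct on all segments of length at least `N`, only the
finitely many prefixes shorter than `N` can contribute wrong elements. Each such prefix has a first
stage at which it enumerates a wrong element, and it is cut off before that stage as soon as this
element has appeared among the negative data.
-/

open Encodable Denumerable
open Nat.Partrec (Code)

section UniformEnumeration

variable {α β : Type*} [Primcodable α] [Primcodable β]

lemma exists_code_of_rePred {p : α → Prop} (hp : REPred p) :
    ∃ c : Code, ∀ a, (c.eval (encode a)).Dom ↔ p a := by
  obtain ⟨c, hc⟩ := Code.exists_code.1 hp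
  refine ⟨c, fun a => ?_⟩
  simp [hc, Part.assert]

lemma exists_monotone_primrec_stages {p : α → Prop} (hp : REPred p) :
    ∃ stage : ℕ → α → Prop, PrimrecRel stage ∧ Monotone stage ∧ ∀ a, p a ↔ ∃ s, stage s a := by
  obtain ⟨c, hc⟩ := exists_code_of_rePred hp
  refine ⟨fun s a => (Code.evaln s c (encode a)).isSome, ?_, fun s t hst a ha => ?_, fun a => ?_⟩
  · exact PrimrecRel.comp Primrec.eq (Primrec.option_isSome.comp (Code.primrec_evaln.comp
      ((Primrec.fst.pair (Primrec.const c)).pair (Primrec.encode.comp Primrec.snd))))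
      (Primrec.const true)
  · obtain ⟨y, hy⟩ := Option.isSome_iff_exists.1 ha
    exact Option.isSome_iff_exists.2 ⟨y, Code.evaln_mono hst hy⟩
  · simp only [← hc, Part.dom_iff_mem, Code.evaln_complete, Option.isSome_iff_exists,
      Option.mem_def]
    exact exists_comm

lemma rePred_exists_of_computablePred {R : α → β → Prop}
    (hR : ComputablePred fun z : α × β => R z.1 z.2) : REPred fun a => ∃ b, R a b := by
  obtain ⟨test, htest, hRtest⟩ := ComputablePred.computable_iff.1 hR
  have hRtest (a : α) (b : β) : R a b ↔ test (a, b) = true := iff_of_eq (congrFun hRtest (a, b))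
  let search (a : α) (n : ℕ) : Option Unit :=
    (decode (α := β) n).bind fun b => bif test (a, b) then some () else none
  have hsearch : Computable₂ search :=
    Computable.option_bind (Computable.decode.comp Computable.snd)
      (Computable.cond (htest.comp ((Computable.fst.comp Computable.fst).pair Computable.snd))
        (Computable.const (some ())) (Computable.const none))
  refine (Partrec.rfindOpt hsearch).dom_re.of_eq fun a => ?_
  simp only [Nat.rfindOpt_dom, hRtest]
  constructor
  · rintro ⟨n, u, hu⟩
    obtain ⟨b, -, hb⟩ := Option.bind_eq_some_iff.1 hu
    exact ⟨b, by_contra fun hn => by simp [hn] at hb⟩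
  · rintro ⟨b, hb⟩
    exact ⟨encode b, (), by simp [search, hb]⟩

lemma exists_computable_index {p : α × ℕ → Prop} (hp : REPred p) :
    ∃ f : α → ℕ, Computable f ∧ ∀ a, W (f a) = {x | p (a, x)} := by
  obtain ⟨c, hc⟩ := exists_code_of_rePred hp
  refine ⟨fun a => encode (c.curry (encode a)), ?_, fun a => Set.ext fun x => ?_⟩
  · exact (Primrec.encode.comp
      (Code.primrec₂_curry.comp (Primrec.const c) Primrec.encode)).to_comp
  · change ((ofNat Code (encode (c.curry (encode a)))).eval x).Dom ↔ p (a, x)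
    rw [ofNat_encode, Code.eval_curry]
    exact hc (a, x)

lemma rePred_exists_mem_W {h : α →. ℕ} (hh : Partrec h) :
    REPred fun z : α × ℕ => ∃ e ∈ h z.1, z.2 ∈ W e := by
  have hrun : Partrec fun z : α × ℕ => (h z.1).bind fun e => (ofNat Code e).eval z.2 :=
    (hh.comp Computable.fst).bind
      (Code.eval_part.comp ((Computable.ofNat Code).comp Computable.snd)
        (Computable.snd.comp Computable.fst))
  refine hrun.dom_re.of_eq fun z => ?_
  simp only [Part.dom_iff_mem, Part.mem_bind_iff, W, Set.mem_ofPred_eq]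
  grind

lemma primrecRel_mem_list : PrimrecRel fun (l : List α) (a : α) => a ∈ l :=
  (PrimrecRel.exists_mem_list Primrec.eq).of_eq fun _ => by simp

lemma primrecRel_prefix : PrimrecRel fun l₁ l₂ : List α => l₁ <+: l₂ :=
  PrimrecPred.of_eq (PrimrecRel.comp Primrec.eq Primrec.fst (Primrec.list_take.comp
    (Primrec.list_length.comp Primrec.fst) Primrec.snd)) fun _ => List.prefix_iff_eq_take.symm

end UniformEnumeration

section Segments

variable {I : Informant} {m n : ℕ}

lemma mem_segment {d : Datum} : d ∈ segment I n ↔ ∃ i < n, I i = d := by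
  simp [segment]

lemma segment_prefix_segment (h : m ≤ n) : segment I m <+: segment I n := by
  obtain ⟨k, rfl⟩ := Nat.exists_eq_add_of_le h
  simp [segment, List.range_add]

lemma eq_segment_of_prefix {v : Seq} (h : v <+: segment I n) : v = segment I v.length := by
  have hlen : v.length ≤ n := by simpa [segment] using h.length_le
  exact (List.prefix_of_prefix_length_le h (segment_prefix_segment hlen)
    (by simp [segment])).eq_of_length (by simp [segment])

lemma posS_segment_subset : posS (segment I n) ⊆ posI I := fun _ hx =>
  let ⟨i, _, hi⟩ := mem_segment.1 hx
  ⟨i, hi⟩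

lemma negS_segment_subset : negS (segment I n) ⊆ negI I := fun _ hx =>
  let ⟨i, _, hi⟩ := mem_segment.1 hx
  ⟨i, hi⟩

lemma eventually_mem_negS_segment {x : ℕ} (hx : x ∈ negI I) :
    ∀ᶠ n in atTop, x ∈ negS (segment I n) := by
  obtain ⟨i, hi⟩ := hx
  filter_upwards [eventually_gt_atTop i] with n hn
  exact mem_segment.2 ⟨i, hn, hi⟩

lemma IsInf.disjoint_negI_posI (hI : IsInf I) : Disjoint (negI I) (posI I) := by
  rw [hI.2]
  exact disjoint_compl_left

end Segments

/-- The corrected hypothesis on the data `σ`, where `E v s` is the part of the hypothesis on `v`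
that has been enumerated by stage `s`: the positive data of `σ` together with all stages
`E v s`, for prefixes `v` of `σ`, that avoid the negative data of `σ`. -/
def correctedHyp (E : Seq → ℕ → Set ℕ) (σ : Seq) : Set ℕ :=
  posS σ ∪ {x | ∃ v s, v <+: σ ∧ x ∈ E v s ∧ Disjoint (negS σ) (E v s)}

section CorrectedHyp

variable {E : Seq → ℕ → Set ℕ} {σ τ : Seq}

lemma subset_correctedHyp {v : Seq} {s : ℕ} (hv : v <+: σ) (h : Disjoint (negS σ) (E v s)) :
    E v s ⊆ correctedHyp E σ :=
  fun _ hx => Or.inr ⟨v, s, hv, hx, h⟩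

lemma disjoint_negS_correctedHyp (hσ : Disjoint (negS σ) (posS σ)) :
    Disjoint (negS σ) (correctedHyp E σ) := by
  refine Set.disjoint_left.2 fun x hneg hx => ?_
  rcases hx with hpos | ⟨v, s, -, hmem, hdisj⟩
  · exact Set.disjoint_left.1 hσ hneg hpos
  · exact Set.disjoint_left.1 hdisj hneg hmem

lemma correctedHyp_subset_of_prefix (hστ : σ <+: τ) (h : Disjoint (negS τ) (correctedHyp E σ)) :
    correctedHyp E σ ⊆ correctedHyp E τ := by
  rintro x (hpos | ⟨v, s, hv, hmem, hdisj⟩)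
  · exact Or.inl (hστ.subset hpos)
  · exact subset_correctedHyp (hv.trans hστ) (h.mono_right (subset_correctedHyp hv hdisj)) hmem

lemma eventually_subset_posI_of_disjoint_negS {A : ℕ → Set ℕ} (hA : Monotone A) {I : Informant}
    (hI : IsInf I) :
    ∀ᶠ n in atTop, ∀ s, Disjoint (negS (segment I n)) (A s) → A s ⊆ posI I := by
  by_cases hwrong : ∃ s, ¬ A s ⊆ posI I
  · obtain ⟨x, hxA, hxI⟩ := Set.not_subset.1 (Nat.find_spec hwrong)
    have hxneg : x ∈ negI I := hI.2 ▸ hxI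
    filter_upwards [eventually_mem_negS_segment hxneg] with n hn s hdisj
    by_contra hs
    have hfirst : Nat.find hwrong ≤ s := Nat.find_min' hwrong hs
    exact Set.disjoint_left.1 hdisj hn (hA hfirst hxA)
  · push Not at hwrong
    exact Eventually.of_forall fun _ s _ => hwrong s

lemma eventually_correctedHyp_subset_posI (hE : ∀ v, Monotone (E v)) {I : Informant} (hI : IsInf I)
    (hcorrect : ∀ᶠ k in atTop, ⋃ s, E (segment I k) s = posI I) :
    ∀ᶠ n in atTop, correctedHyp E (segment I n) ⊆ posI I := by
  obtain ⟨N, hN⟩ := eventually_atTop.1 hcorrect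
  have hshort : ∀ᶠ n in atTop, ∀ k < N, ∀ s,
      Disjoint (negS (segment I n)) (E (segment I k) s) → E (segment I k) s ⊆ posI I :=
    (Set.finite_lt_nat N).eventually_all.2 fun k _ =>
      eventually_subset_posI_of_disjoint_negS (hE _) hI
  filter_upwards [hshort] with n hn
  rintro x (hpos | ⟨v, s, hv, hmem, hdisj⟩)
  · exact posS_segment_subset hpos
  · rw [eq_segment_of_prefix hv] at hmem hdisj
    rcases lt_or_ge v.length N with hlt | hge
    · exact hn _ hlt s hdisj hmem
    · exact hN _ hge ▸ Set.mem_iUnion_of_mem s hmem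

theorem eventually_correctedHyp_eq_posI (hE : ∀ v, Monotone (E v)) {I : Informant} (hI : IsInf I)
    (hcorrect : ∀ᶠ k in atTop, ⋃ s, E (segment I k) s = posI I) :
    ∀ᶠ n in atTop, correctedHyp E (segment I n) = posI I := by
  filter_upwards [eventually_correctedHyp_subset_posI hE hI hcorrect, hcorrect] with n hsub hn
  refine hsub.antisymm (hn ▸ Set.iUnion_subset fun s => subset_correctedHyp List.prefix_rfl ?_)
  exact hI.disjoint_negI_posI.mono negS_segment_subset (hn ▸ Set.subset_iUnion _ s)

end CorrectedHyp

section Computability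

variable {stage : ℕ → Seq × ℕ → Prop}

lemma primrecRel_disjoint_negS_stage (hstage : PrimrecRel stage) :
    PrimrecRel fun (σ : Seq) (w : Seq × ℕ) => Disjoint (negS σ) {x | stage w.2 (w.1, x)} := by
  have hdatum : PrimrecRel fun (d : Datum) (w : Seq × ℕ) => d.2 = true ∨ ¬ stage w.2 (w.1, d.1) :=
    (PrimrecRel.comp Primrec.eq (Primrec.snd.comp Primrec.fst) (Primrec.const true)).or
      (hstage.comp (Primrec.snd.comp Primrec.snd)
        ((Primrec.fst.comp Primrec.snd).pair (Primrec.fst.comp Primrec.fst))).not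
  refine (PrimrecRel.forall_mem_list hdatum).of_eq fun z => ?_
  simp [Set.disjoint_left, negS]

lemma rePred_mem_correctedHyp (hstage : PrimrecRel stage) :
    REPred fun z : Seq × ℕ => z.2 ∈ correctedHyp (fun v s => {x | stage s (v, x)}) z.1 := by
  let Witness (z : Seq × ℕ) (w : Seq × ℕ) : Prop :=
    (z.2, true) ∈ z.1 ∨
      w.1 <+: z.1 ∧ stage w.2 (w.1, z.2) ∧ Disjoint (negS z.1) {x | stage w.2 (w.1, x)}
  have hσ : Primrec fun q : (Seq × ℕ) × (Seq × ℕ) => q.1.1 := Primrec.fst.comp Primrec.fst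
  have hx : Primrec fun q : (Seq × ℕ) × (Seq × ℕ) => q.1.2 := Primrec.snd.comp Primrec.fst
  have hv : Primrec fun q : (Seq × ℕ) × (Seq × ℕ) => q.2.1 := Primrec.fst.comp Primrec.snd
  have hs : Primrec fun q : (Seq × ℕ) × (Seq × ℕ) => q.2.2 := Primrec.snd.comp Primrec.snd
  have hWitness : PrimrecRel Witness :=
    (primrecRel_mem_list.comp hσ (hx.pair (Primrec.const true))).or <|
      (primrecRel_prefix.comp hv hσ).and <|
        (hstage.comp hs (hv.pair hx)).and <|
          (primrecRel_disjoint_negS_stage hstage).comp hσ Primrec.snd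
  refine (rePred_exists_of_computablePred hWitness.computablePred).of_eq fun z => ?_
  simp [Witness, correctedHyp, posS, exists_or]

end Computability

/-- The learner that conjectures `f σ` on every finite sequence `σ`; it is undefined on the numbers
that do not code a finite sequence. -/
def indexLearner (f : Seq → ℕ) : Learner := fun n => ((decode (α := Seq) n).map f : Option ℕ)

section IndexLearner

variable {f : Seq → ℕ} {E : Seq → ℕ → Set ℕ} {I : Informant}

lemma partrec_indexLearner (hf : Computable f) : Partrec (indexLearner f) :=
  Computable.ofOption (Computable.option_map Computable.decode (hf.comp Computable.snd))

lemma gop_indexLearner (n : ℕ) : Gop (indexLearner f) I n = Part.some (f (segment I n)) := by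
  simp [Gop, indexLearner]

lemma cons_indexLearner (hf : ∀ σ, W (f σ) = correctedHyp E σ) (hI : IsInf I) :
    Cons (Gop (indexLearner f) I) I := by
  intro n
  have hdisj : Disjoint (negS (segment I n)) (posS (segment I n)) :=
    hI.disjoint_negI_posI.mono negS_segment_subset posS_segment_subset
  rw [gop_indexLearner]
  refine ⟨_, Part.mem_some _, ?_⟩
  rw [ConsH, hf]
  exact ⟨Set.subset_union_left, (disjoint_negS_correctedHyp hdisj).inter_eq⟩

lemma wMon_indexLearner (hf : ∀ σ, W (f σ) = correctedHyp E σ) :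
    WMon (Gop (indexLearner f) I) I := by
  intro s t hst e he hcons e' he'
  rw [gop_indexLearner, Part.mem_some_iff] at he he'
  subst he he'
  rw [ConsH, hf] at hcons
  rw [hf, hf]
  exact correctedHyp_subset_of_prefix (segment_prefix_segment hst)
    (Set.disjoint_iff_inter_eq_empty.2 hcons.2)

lemma bc_indexLearner (hf : ∀ σ, W (f σ) = correctedHyp E σ) (hE : ∀ v, Monotone (E v))
    (hI : IsInf I) (hcorrect : ∀ᶠ k in atTop, ⋃ s, E (segment I k) s = posI I) :
    Bc (Gop (indexLearner f) I) I := by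
  filter_upwards [eventually_correctedHyp_eq_posI hE hI hcorrect] with n hn
  rw [gop_indexLearner]
  exact ⟨_, Part.mem_some _, (hf _).trans hn⟩

end IndexLearner

theorem exists_cons_wMon_learner {h : Learner} (hh : Partrec h) :
    ∃ h' : Learner, Partrec h' ∧ ∀ I, IsInf I →
      Cons (Gop h' I) I ∧ WMon (Gop h' I) I ∧ (Bc (Gop h I) I → Bc (Gop h' I) I) := by
  have hseq : Partrec fun σ : Seq => h (encode σ) := hh.comp Computable.encode
  obtain ⟨stage, hprim, hmono, hstage⟩ := exists_monotone_primrec_stages (rePred_exists_mem_W hseq)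
  obtain ⟨f, hf, hW⟩ := exists_computable_index (rePred_mem_correctedHyp hprim)
  refine ⟨indexLearner f, partrec_indexLearner hf, fun I hI =>
    ⟨cons_indexLearner hW hI, wMon_indexLearner hW, fun hBc =>
      bc_indexLearner hW (fun v s t hst x => hmono hst (v, x)) hI ?_⟩⟩
  filter_upwards [hBc] with k ⟨e, he, hWe⟩
  ext x
  have hunique : ∀ e' ∈ h (encode (segment I k)), e' = e := fun e' he' => Part.mem_unique he' he
  rw [← hWe, Set.mem_iUnion]
  exact (hstage (segment I k, x)).symm.trans
    ⟨fun ⟨e', he', hx⟩ => hunique e' he' ▸ hx, fun hx => ⟨e, he, hx⟩⟩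

theorem bc_eq_globally_consistent_wmon_bc_general (P : Informant → Prop) :
    Learnable TT AllL P Gop Bc =
      Learnable Cons AllL P Gop (fun p I => WMon p I ∧ Bc p I) := by
  ext 𝓛
  constructor
  · rintro ⟨h, hh, -, -, hlearns⟩
    obtain ⟨h', hh', hgood⟩ := exists_cons_wMon_learner hh
    refine ⟨h', hh', trivial, fun I hI _ => (hgood I hI).1, fun L hL => ?_⟩
    obtain ⟨hRE, hBc⟩ := hlearns L hL
    refine ⟨hRE, fun I hP hIL => ?_⟩
    have hI : IsInf I := by rwa [IsInf, hIL.1]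
    obtain ⟨-, hWMon, hBc'⟩ := hgood I hI
    exact ⟨hWMon, hBc' (hBc I hP hIL)⟩
  · rintro ⟨h, hh, -, -, hlearns⟩
    exact ⟨h, hh, trivial, fun _ _ _ => trivial, fun L hL =>
      ⟨(hlearns L hL).1, fun I hP hIL => ((hlearns L hL).2 I hP hIL).2⟩⟩

/-- `[Inf G Bc] = [τ(Cons) Inf G WMon Bc]`. -/
theorem bc_eq_globally_consistent_wmon_bc :
    Learnable TT AllL AllI Gop Bc =
      Learnable Cons AllL AllI Gop (fun p I => WMon p I ∧ Bc p I) :=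
  bc_eq_globally_consistent_wmon_bc_general AllI

end InfBc
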